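/- (Harmonic measure upper bound on strip boundary) Let r ∈ (0,1), let I₀ ⊆ ℝ be an interval with 0 < |I₀| ≤ 1, and let Σ = {x + iy : x ∈ ℝ, |y| < r} \ I₀. If t ∈ Σ ∩ ℝ satisfies d(t, I₀) ≤ 1, then the harmonic measure μ_t^Σ of Σ centered at t satisfies, for its density with respect to arclength on the lines {Im z = ±r}: (dμ_t^Σ/dμ_L)(x ± ir) ≤ (2/r) e^{−d(x, I₀)} for all x ∈ ℝ. -/

import Mathlib

open MeasureTheory Set Filter

/-- A continuous function is harmonic on an open set `U ⊆ ℂ` if it satisfies the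
mean value property on all sufficiently small circles around each point of `U`. -/
def HarmonicOnSet (u : ℂ → ℝ) (U : Set ℂ) : Prop :=
  ContinuousOn u U ∧
  ∀ z ∈ U, ∀ᶠ ρ in nhdsWithin (0 : ℝ) (Set.Ioi (0 : ℝ)),
    u z = (2 * Real.pi)⁻¹ *
      ∫ θ in (0 : ℝ)..(2 * Real.pi), u (z + (Complex.ofReal ρ) * Complex.exp ((θ : ℂ) * Complex.I))

open Topology Real Metric

theorem harmonicOnSet_iff {u : ℂ → ℝ} {U : Set ℂ} :
    HarmonicOnSet u U ↔ ContinuousOn u U ∧ ∀ z ∈ U, ∀ᶠ ρ in 𝓝[>] (0 : ℝ),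
      u z = circleAverage u z ρ := Iff.rfl

theorem eventually_closedBall_subset_nhdsGT {U : Set ℂ} (hU : IsOpen U) {z : ℂ} (hz : z ∈ U) :
    ∀ᶠ ρ in 𝓝[>] (0 : ℝ), 0 < ρ ∧ closedBall z ρ ⊆ U := by
  filter_upwards [self_mem_nhdsWithin,
    nhdsWithin_le_nhds (eventually_closedBall_subset (hU.mem_nhds hz))] with ρ h0 h1
  exact ⟨h0, h1⟩

theorem ContinuousOn.circleIntegrable_of_closedBall_subset {u : ℂ → ℝ} {U : Set ℂ}
    (hu : ContinuousOn u U) {z : ℂ} {ρ : ℝ} (hρ : 0 < ρ) (h : closedBall z ρ ⊆ U) :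
    CircleIntegrable u z ρ :=
  (hu.mono (sphere_subset_closedBall.trans h)).circleIntegrable hρ.le

theorem HarmonicOnSet.add {u v : ℂ → ℝ} {U : Set ℂ} (hU : IsOpen U) (hu : HarmonicOnSet u U)
    (hv : HarmonicOnSet v U) : HarmonicOnSet (fun z ↦ u z + v z) U := by
  refine harmonicOnSet_iff.2 ⟨hu.1.add hv.1, fun z hz ↦ ?_⟩
  filter_upwards [(harmonicOnSet_iff.1 hu).2 z hz, (harmonicOnSet_iff.1 hv).2 z hz,
    eventually_closedBall_subset_nhdsGT hU hz] with ρ h1 h2 h3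
  rw [circleAverage_fun_add (hu.1.circleIntegrable_of_closedBall_subset h3.1 h3.2)
    (hv.1.circleIntegrable_of_closedBall_subset h3.1 h3.2), ← h1, ← h2]

theorem HarmonicOnSet.const_mul {u : ℂ → ℝ} {U : Set ℂ} (c : ℝ) (hu : HarmonicOnSet u U) :
    HarmonicOnSet (fun z ↦ c * u z) U := by
  refine harmonicOnSet_iff.2 ⟨continuousOn_const.mul hu.1, fun z hz ↦ ?_⟩
  filter_upwards [(harmonicOnSet_iff.1 hu).2 z hz] with ρ h1
  have := circleAverage_fun_smul (a := c) (f := u) (c := z) (R := ρ)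
  simp only [smul_eq_mul] at this
  rw [this, ← h1]

theorem harmonicOnSet_const (c : ℝ) (U : Set ℂ) : HarmonicOnSet (fun _ ↦ c) U :=
  harmonicOnSet_iff.2 ⟨continuousOn_const, fun z _ ↦ .of_forall fun ρ ↦
    (circleAverage_const c z ρ).symm⟩

theorem HarmonicOnSet.mono {u : ℂ → ℝ} {U V : Set ℂ} (hu : HarmonicOnSet u U) (h : V ⊆ U) :
    HarmonicOnSet u V :=
  ⟨hu.1.mono h, fun z hz ↦ hu.2 z (h hz)⟩

theorem circleAverage_comp_conj (u : ℂ → ℝ) (z : ℂ) (ρ : ℝ) :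
    circleAverage (fun w ↦ u (starRingEnd ℂ w)) z ρ = circleAverage u (starRingEnd ℂ z) ρ := by
  have h := intervalIntegral.integral_comp_sub_left (a := 0) (b := 2 * π)
    (fun θ ↦ u (circleMap (starRingEnd ℂ z) ρ θ)) (2 * π)
  simp only [sub_self, sub_zero] at h
  rw [circleAverage, circleAverage, ← h]
  congr 2 with θ
  have : circleMap (starRingEnd ℂ z) ρ (2 * π - θ) = circleMap (starRingEnd ℂ z) ρ (-θ) := by
    rw [← periodic_circleMap (starRingEnd ℂ z) ρ (-θ)]
    ring_nf
  rw [this]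
  simp [circleMap, ← Complex.exp_conj]

theorem HarmonicOnSet.comp_conj {u : ℂ → ℝ} {U : Set ℂ} (hu : HarmonicOnSet u U)
    (hU : ∀ z ∈ U, starRingEnd ℂ z ∈ U) :
    HarmonicOnSet (fun z ↦ u (starRingEnd ℂ z)) U := by
  refine harmonicOnSet_iff.2
    ⟨hu.1.comp Complex.continuous_conj.continuousOn hU, fun z hz ↦ ?_⟩
  filter_upwards [(harmonicOnSet_iff.1 hu).2 _ (hU z hz)] with ρ h1
  rw [h1, circleAverage_comp_conj]

theorem circleAverage_re_sq_sub_two_mul_im_sq (c : ℝ) (z : ℂ) (ρ : ℝ) :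
    circleAverage (fun w ↦ w.re ^ 2 - 2 * w.im ^ 2 + c) z ρ =
      z.re ^ 2 - 2 * z.im ^ 2 + c - ρ ^ 2 / 2 := by
  have h : ∀ θ : ℝ, (circleMap z ρ θ).re ^ 2 - 2 * (circleMap z ρ θ).im ^ 2 + c =
      (z.re ^ 2 - 2 * z.im ^ 2 + c) + 2 * z.re * ρ * cos θ - 4 * z.im * ρ * sin θ
        + ρ ^ 2 * cos θ ^ 2 - 2 * ρ ^ 2 * sin θ ^ 2 := by
    intro θ
    simp [circleMap, Complex.exp_ofReal_mul_I_re, Complex.exp_ofReal_mul_I_im]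
    ring
  rw [circleAverage]
  simp_rw [h]
  rw [intervalIntegral.integral_sub, intervalIntegral.integral_add, intervalIntegral.integral_sub,
    intervalIntegral.integral_add]
  · simp [integral_cos_sq, integral_sin_sq]
    field_simp
    ring
  all_goals exact Continuous.intervalIntegrable (by fun_prop) _ _

/-- Maximum principle for functions bounded above on a closed strip, with the strictly
superharmonic barrier `(Re z)² - 2 (Im z)² + 2 r²` controlling infinity. -/
theorem HarmonicOnSet.nonpos_of_strip {W : ℂ → ℝ} {r C : ℝ} {S : Set ℂ} (hS : IsOpen S)
    (hSr : ∀ z ∈ S, |z.im| ≤ r) (hW : HarmonicOnSet W S)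
    (hc : ContinuousOn W {z | |z.im| ≤ r}) (hC : ∀ z, |z.im| ≤ r → W z ≤ C)
    (hb : ∀ z, |z.im| ≤ r → z ∉ S → W z ≤ 0) {z₀ : ℂ} (hz₀ : |z₀.im| ≤ r) : W z₀ ≤ 0 := by
  by_contra! hpos
  set B : ℂ → ℝ := fun w ↦ w.re ^ 2 - 2 * w.im ^ 2 + 2 * r ^ 2 with hB
  have hBcont : Continuous B := by fun_prop
  have hBge : ∀ z : ℂ, |z.im| ≤ r → z.re ^ 2 ≤ B z := by
    intro z hz
    have : z.im ^ 2 ≤ r ^ 2 := sq_le_sq' (abs_le.1 hz).1 (abs_le.1 hz).2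
    simp only [hB]; linarith
  have hB0 : 0 ≤ B z₀ := (sq_nonneg _).trans (hBge _ hz₀)
  obtain ⟨ε, hε, hε'⟩ : ∃ ε : ℝ, 0 < ε ∧ ε * B z₀ < W z₀ := by
    refine ⟨W z₀ / (B z₀ + 1), by positivity, ?_⟩
    rw [div_mul_eq_mul_div, div_lt_iff₀ (by positivity)]
    nlinarith
  have hCpos : 0 < C := hpos.trans_le (hC _ hz₀)
  set M : ℝ := |z₀.re| + C / ε + 1 with hM
  have hM1 : 1 ≤ M := by
    have : 0 < C / ε := by positivity
    have := abs_nonneg z₀.re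
    linarith
  have hMC : C ≤ ε * M ^ 2 := by
    have h1 : C / ε ≤ M := by have := abs_nonneg z₀.re; linarith
    rw [div_le_iff₀ hε] at h1
    nlinarith [mul_le_mul_of_nonneg_left hM1 (mul_nonneg hε.le (zero_le_one.trans hM1))]
  have hK : IsCompact (Icc (-M) M ×ℂ Icc (-r) r) := isCompact_Icc.reProdIm isCompact_Icc
  have hKs : Icc (-M) M ×ℂ Icc (-r) r ⊆ {z : ℂ | |z.im| ≤ r} := fun z hz ↦ abs_le.2 hz.2
  have hz₀K : z₀ ∈ Icc (-M) M ×ℂ Icc (-r) r := by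
    refine ⟨abs_le.1 ?_, abs_le.1 hz₀⟩
    have : 0 < C / ε := by positivity
    linarith
  obtain ⟨w, hwK, hw⟩ := hK.exists_isMaxOn ⟨z₀, hz₀K⟩
    ((hc.mono hKs).sub (continuousOn_const (c := ε).mul hBcont.continuousOn))
  have hwr := hKs hwK
  have hVw : 0 < W w - ε * B w := by
    have : W z₀ - ε * B z₀ ≤ W w - ε * B w := hw hz₀K
    linarith
  have hwS : w ∈ S := by
    by_contra h
    have := hb w hwr h
    have := mul_nonneg hε.le ((sq_nonneg _).trans (hBge w hwr))
    linarith
  have hwM : |w.re| < M := by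
    by_contra! h
    have h1 := hC w hwr
    have h2 := mul_le_mul_of_nonneg_left (hBge w hwr) hε.le
    have h3 : M ^ 2 ≤ w.re ^ 2 := by
      rw [← sq_abs w.re]; exact pow_le_pow_left₀ (by linarith) h 2
    have h4 := mul_le_mul_of_nonneg_left h3 hε.le
    linarith
  have hO : IsOpen (S ∩ {z : ℂ | |z.re| < M}) :=
    hS.inter (isOpen_lt (by fun_prop) continuous_const)
  obtain ⟨ρ, hρ, hρ0, hρS⟩ := (((harmonicOnSet_iff.1 hW).2 w hwS).and
    (eventually_closedBall_subset_nhdsGT hO ⟨hwS, hwM⟩)).exists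
  have hWi := hW.1.circleIntegrable_of_closedBall_subset hρ0 (hρS.trans inter_subset_left)
  have hBi : CircleIntegrable (fun z ↦ ε * B z) w ρ :=
    (continuous_const.mul hBcont).continuousOn.circleIntegrable hρ0.le
  have hle : circleAverage (fun z ↦ W z - ε * B z) w ρ ≤ W w - ε * B w := by
    refine circleAverage_mono_on_of_le_circle (hWi.sub hBi) fun x hx ↦ ?_
    rw [abs_of_pos hρ0] at hx
    have hx' := hρS (sphere_subset_closedBall hx)
    exact hw ⟨abs_le.1 hx'.2.le, abs_le.1 (hSr x hx'.1)⟩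
  rw [circleAverage_fun_sub hWi hBi, ← hρ] at hle
  have h5 := circleAverage_fun_smul (a := ε) (f := B) (c := w) (R := ρ)
  simp only [smul_eq_mul] at h5
  rw [h5, circleAverage_re_sq_sub_two_mul_im_sq] at hle
  have : 0 < ε * ρ ^ 2 := by positivity
  simp only [hB] at hle
  linarith

/-- The sum of the Poisson kernels of the strip `|Im z| < π / (2 k)` at the boundary points
`s ± i π / (2 k)`. -/
noncomputable def stripKernel (k : ℝ) (z : ℂ) (s : ℝ) : ℝ :=
  k / π * ((Complex.cosh (k * (z - s)))⁻¹).re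

theorem cosh_mul_sub_eq (k : ℝ) (z : ℂ) (s : ℝ) :
    Complex.cosh (k * (z - s)) =
      ⟨cosh (k * (z.re - s)) * cos (k * z.im), sinh (k * (z.re - s)) * sin (k * z.im)⟩ := by
  have : (k * (z - s) : ℂ) = (k * (z.re - s) : ℝ) + (k * z.im : ℝ) * Complex.I := by
    apply Complex.ext <;> simp
  rw [this, Complex.cosh_add, Complex.cosh_mul_I, Complex.sinh_mul_I]
  generalize k * (z.re - s) = ξ
  generalize k * z.im = η
  rw [← Complex.ofReal_cosh, ← Complex.ofReal_sinh, ← Complex.ofReal_cos, ← Complex.ofReal_sin]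
  apply Complex.ext <;> simp [-Complex.ofReal_cosh, -Complex.ofReal_sinh, -Complex.ofReal_cos,
    -Complex.ofReal_sin]

theorem stripKernel_eq (k : ℝ) (z : ℂ) (s : ℝ) :
    stripKernel k z s = k / π * (cosh (k * (z.re - s)) * cos (k * z.im) /
      (sinh (k * (z.re - s)) ^ 2 + cos (k * z.im) ^ 2)) := by
  rw [stripKernel, Complex.inv_re, Complex.normSq_apply, cosh_mul_sub_eq]
  congr 2
  have h1 := Real.cosh_sq (k * (z.re - s))
  have h2 := Real.sin_sq_add_cos_sq (k * z.im)
  linear_combination cos (k * z.im) ^ 2 * h1 + sinh (k * (z.re - s)) ^ 2 * h2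

theorem stripKernel_nonneg {k : ℝ} (hk : 0 ≤ k) {z : ℂ} (hz : |k * z.im| < π / 2) (s : ℝ) :
    0 ≤ stripKernel k z s := by
  have := cos_pos_of_mem_Ioo (abs_lt.1 hz)
  rw [stripKernel_eq]
  positivity

theorem cosh_mul_sub_ne_zero {k : ℝ} {z : ℂ} (hz : |k * z.im| < π / 2) (s : ℝ) :
    Complex.cosh (k * (z - s)) ≠ 0 := by
  intro h
  have h1 := congrArg Complex.re h
  rw [cosh_mul_sub_eq] at h1
  exact (mul_pos (cosh_pos _) (cos_pos_of_mem_Ioo (abs_lt.1 hz))).ne' h1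

theorem isOpen_abs_mul_im_lt (k c : ℝ) : IsOpen {z : ℂ | |k * z.im| < c} :=
  isOpen_lt (by fun_prop) continuous_const

theorem continuousOn_stripKernel (k : ℝ) :
    ContinuousOn (Function.uncurry (stripKernel k)) ({z | |k * z.im| < π / 2} ×ˢ univ) := by
  refine continuousOn_const.mul (Complex.continuous_re.comp_continuousOn
    (ContinuousOn.inv₀ ?_ fun p hp ↦ cosh_mul_sub_ne_zero hp.1 p.2))
  exact (Complex.continuous_cosh.comp (by fun_prop)).continuousOn

theorem circleAverage_stripKernel {k : ℝ} {z : ℂ} {ρ : ℝ} (hρ : 0 < ρ)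
    (h : closedBall z ρ ⊆ {z | |k * z.im| < π / 2}) (s : ℝ) :
    circleAverage (fun w ↦ stripKernel k w s) z ρ = stripKernel k z s := by
  have hd : ∀ w ∈ {z : ℂ | |k * z.im| < π / 2},
      AnalyticAt ℂ (fun w : ℂ ↦ (k / π : ℂ) * (Complex.cosh (k * (w - s)))⁻¹) w := by
    intro w hw
    refine analyticAt_const.mul (AnalyticAt.inv ?_ (cosh_mul_sub_ne_zero hw s))
    fun_prop
  have hh : InnerProductSpace.HarmonicOnNhd (fun w ↦ stripKernel k w s) (closedBall z |ρ|) := by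
    intro w hw
    rw [abs_of_pos hρ] at hw
    convert (hd w (h hw)).harmonicAt_re using 2 with w
    rw [← Complex.ofReal_div, Complex.re_ofReal_mul, stripKernel]
  exact hh.circleAverage_eq

/-- The harmonic extension to the strip `|Im z| < π / (2 k)` of the datum `g` on both lines. -/
noncomputable def stripExtension (k : ℝ) (g : ℝ → ℝ) (z : ℂ) : ℝ :=
  ∫ s, g s * stripKernel k z s

theorem stripExtension_harmonicOnSet (k : ℝ) {g : ℝ → ℝ} (hg : Continuous g)
    (hgs : HasCompactSupport g) :
    HarmonicOnSet (stripExtension k g) {z | |k * z.im| < π / 2} := by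
  have hcont : ContinuousOn (Function.uncurry fun z s ↦ g s * stripKernel k z s)
      ({z | |k * z.im| < π / 2} ×ˢ univ) :=
    (hg.comp continuous_snd).continuousOn.mul (continuousOn_stripKernel k)
  refine harmonicOnSet_iff.2 ⟨continuousOn_integral_of_compact_support hgs hcont ?_, ?_⟩
  · intro p x _ hx
    rw [image_eq_zero_of_notMem_tsupport hx, zero_mul]
  intro z hz
  filter_upwards [eventually_closedBall_subset_nhdsGT (isOpen_abs_mul_im_lt k _) hz]
    with ρ ⟨hρ, hsub⟩
  have hcirc : ∀ θ, circleMap z ρ θ ∈ {z : ℂ | |k * z.im| < π / 2} := fun θ ↦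
    hsub (circleMap_mem_closedBall z hρ.le θ)
  have hF : Continuous (Function.uncurry fun θ s ↦ g s * stripKernel k (circleMap z ρ θ) s) :=
    hcont.comp_continuous (f := fun p : ℝ × ℝ ↦ (circleMap z ρ p.1, p.2)) (by fun_prop)
      fun p ↦ ⟨hcirc p.1, mem_univ _⟩
  have hint : Integrable (Function.uncurry fun θ s ↦ g s * stripKernel k (circleMap z ρ θ) s)
      ((volume.restrict (uIoc 0 (2 * π))).prod volume) := by
    have h1 : IntegrableOn (Function.uncurry fun θ s ↦ g s * stripKernel k (circleMap z ρ θ) s)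
        (uIcc 0 (2 * π) ×ˢ tsupport g) :=
      hF.continuousOn.integrableOn_compact (isCompact_uIcc.prod hgs)
    have h2 : IntegrableOn (Function.uncurry fun θ s ↦ g s * stripKernel k (circleMap z ρ θ) s)
        (uIoc 0 (2 * π) ×ˢ univ) := by
      refine (h1.mono_set (prod_mono_left uIoc_subset_uIcc)).of_forall_sdiff_eq_zero
        (measurableSet_uIoc.prod MeasurableSet.univ) ?_
      rintro ⟨θ, s⟩ ⟨h3, h4⟩
      have : s ∉ tsupport g := fun h ↦ h4 ⟨h3.1, h⟩
      simp [image_eq_zero_of_notMem_tsupport this]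
    rwa [IntegrableOn, Measure.volume_eq_prod, ← Measure.prod_restrict,
      Measure.restrict_univ] at h2
  rw [circleAverage]
  simp only [stripExtension]
  rw [intervalIntegral_integral_swap hint, smul_eq_mul, ← integral_const_mul]
  congr 1 with s
  rw [intervalIntegral.integral_const_mul, ← circleAverage_stripKernel hρ hsub s, circleAverage,
    smul_eq_mul]
  ring

theorem continuous_stripKernel {k : ℝ} {z : ℂ} (hz : |k * z.im| < π / 2) :
    Continuous (stripKernel k z) :=
  (continuousOn_stripKernel k).comp_continuous (f := fun s : ℝ ↦ (z, s)) (by fun_prop)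
    fun _ ↦ ⟨hz, mem_univ _⟩

theorem integrable_mul_stripKernel {k : ℝ} {g : ℝ → ℝ} (hg : Continuous g)
    (hgs : HasCompactSupport g) {z : ℂ} (hz : |k * z.im| < π / 2) :
    Integrable fun s ↦ g s * stripKernel k z s :=
  (hg.mul (continuous_stripKernel hz)).integrable_of_hasCompactSupport hgs.mul_right

theorem stripExtension_nonneg {k : ℝ} (hk : 0 ≤ k) {g : ℝ → ℝ} (hg : ∀ s, 0 ≤ g s) {z : ℂ}
    (hz : |k * z.im| < π / 2) : 0 ≤ stripExtension k g z :=
  integral_nonneg fun s ↦ mul_nonneg (hg s) (stripKernel_nonneg hk hz s)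

theorem integral_stripKernel {k : ℝ} {z : ℂ} (hz : |k * z.im| < π / 2) (τ : ℝ) :
    ∫ s in (z.re - τ)..(z.re + τ), stripKernel k z s =
      2 / π * arctan (sinh (k * τ) / cos (k * z.im)) := by
  have hc := cos_pos_of_mem_Ioo (abs_lt.1 hz)
  have hd : ∀ s ∈ uIcc (z.re - τ) (z.re + τ),
      HasDerivAt (fun s ↦ 1 / π * arctan (sinh (k * (s - z.re)) / cos (k * z.im)))
        (stripKernel k z s) s := by
    intro s _
    have h := ((((((hasDerivAt_id s).sub_const z.re).const_mul k).sinh).div_const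
      (cos (k * z.im))).arctan).const_mul (1 / π)
    convert! h using 1
    rw [stripKernel_eq, ← neg_sub s z.re, mul_neg, sinh_neg, cosh_neg]
    simp only [id]
    field_simp
    ring
  rw [intervalIntegral.integral_eq_sub_of_hasDerivAt hd]
  · rw [show k * (z.re - τ - z.re) = -(k * τ) by ring, show k * (z.re + τ - z.re) = k * τ by ring,
      sinh_neg, neg_div, arctan_neg]
    ring
  · exact (continuous_stripKernel hz).intervalIntegrable _ _

theorem mul_arctan_le_stripExtension {k : ℝ} (hk : 0 ≤ k) {g : ℝ → ℝ} (hg : Continuous g)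
    (hgs : HasCompactSupport g) (hg0 : ∀ s, 0 ≤ g s) {z : ℂ} (hz : |k * z.im| < π / 2)
    {τ m : ℝ} (hτ : 0 ≤ τ) (hm : ∀ s ∈ Icc (z.re - τ) (z.re + τ), m ≤ g s) :
    m * (2 / π * arctan (sinh (k * τ) / cos (k * z.im))) ≤ stripExtension k g z := by
  have hcont := continuous_stripKernel hz
  have hint := integrable_mul_stripKernel hg hgs hz
  calc m * (2 / π * arctan (sinh (k * τ) / cos (k * z.im)))
      = ∫ s in (z.re - τ)..(z.re + τ), m * stripKernel k z s := by
        rw [intervalIntegral.integral_const_mul, integral_stripKernel hz]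
    _ ≤ ∫ s in (z.re - τ)..(z.re + τ), g s * stripKernel k z s := by
        refine intervalIntegral.integral_mono_on (by linarith)
          (hcont.const_mul m |>.intervalIntegrable _ _)
          ((hg.mul hcont).intervalIntegrable _ _) fun s hs ↦ ?_
        exact mul_le_mul_of_nonneg_right (hm s hs) (stripKernel_nonneg hk hz s)
    _ ≤ stripExtension k g z := by
        rw [intervalIntegral.integral_of_le (by linarith)]
        exact setIntegral_le_integral hint
          (.of_forall fun s ↦ mul_nonneg (hg0 s) (stripKernel_nonneg hk hz s))

theorem stripKernel_ofReal_le {k : ℝ} (hk : 0 ≤ k) (t s : ℝ) :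
    stripKernel k t s ≤ 2 * k / π * exp (-(k * |t - s|)) := by
  have h1 : stripKernel k t s = k / π * (cosh (k * |t - s|))⁻¹ := by
    have := Real.cosh_sq (k * (t - s))
    rw [stripKernel_eq, ← cosh_abs (k * |t - s|), abs_mul, abs_abs, ← abs_mul, cosh_abs]
    simp only [Complex.ofReal_re, Complex.ofReal_im, mul_zero, cos_zero, one_pow, ← this]
    have := (cosh_pos (k * (t - s))).ne'
    field_simp
  have h2 : (cosh (k * |t - s|))⁻¹ ≤ 2 * exp (-(k * |t - s|)) := by
    rw [exp_neg, ← div_eq_mul_inv, inv_le_comm₀ (cosh_pos _) (by positivity), inv_div, cosh_eq]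
    have := exp_pos (-(k * |t - s|))
    linarith
  calc stripKernel k t s ≤ k / π * (2 * exp (-(k * |t - s|))) := by
        rw [h1]; gcongr
    _ = _ := by ring

theorem tendsto_arctan_div_cos_mul {r : ℝ} (hr : 0 < r) {c : ℝ} (hc : 0 < c) :
    Tendsto (fun k ↦ arctan (c / cos (k * r))) (𝓝[<] (π / 2 / r)) (𝓝 (π / 2)) := by
  refine (tendsto_arctan_atTop.mono_right nhdsWithin_le_nhds).comp ?_
  have hcos : Tendsto (fun k ↦ cos (k * r)) (𝓝[<] (π / 2 / r)) (𝓝[>] 0) := by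
    refine tendsto_nhdsWithin_iff.2 ⟨?_, ?_⟩
    · have h : ContinuousAt (fun k ↦ cos (k * r)) (π / 2 / r) := by fun_prop
      have h' := h.tendsto
      rw [div_mul_cancel₀ _ hr.ne', cos_pi_div_two] at h'
      exact h'.mono_left nhdsWithin_le_nhds
    · filter_upwards [self_mem_nhdsWithin,
        nhdsWithin_le_nhds (lt_mem_nhds (show 0 < π / 2 / r by positivity))] with k h1 h2
      have h3 : k * r < π / 2 := (lt_div_iff₀ hr).1 h1
      have h4 : 0 < k * r := mul_pos h2 hr
      exact cos_pos_of_mem_Ioo ⟨by linarith, h3⟩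
  exact (tendsto_inv_nhdsGT_zero.comp hcos).const_mul_atTop hc

theorem exists_sub_le_stripExtension {r : ℝ} (hr : 0 < r) (hr1 : r ≤ 1) {g : ℝ → ℝ}
    (hg : Continuous g) (hgs : HasCompactSupport g) (hg0 : ∀ s, 0 ≤ g s) {ε : ℝ} (hε : 0 < ε) :
    ∃ k, 1 ≤ k ∧ k * r < π / 2 ∧
      ∀ z : ℂ, |z.im| = r → g z.re - ε ≤ stripExtension k g z := by
  obtain ⟨δ, hδ, hgδ⟩ := Metric.uniformContinuous_iff.1
    (hgs.uniformContinuous_of_continuous hg) (ε / 2) (half_pos hε)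
  obtain ⟨G, hG⟩ := hgs.exists_bound_of_continuous hg
  have hG0 : 0 ≤ G := (norm_nonneg _).trans (hG 0)
  have hlim := ((tendsto_arctan_div_cos_mul hr (sinh_pos_iff.2 (half_pos hδ))).const_mul
    (2 / π)).eventually (lt_mem_nhds (a := 1 - ε / (2 * (G + 1))) (by
      have : 0 < ε / (2 * (G + 1)) := by positivity
      field_simp at this ⊢
      linarith))
  have hone : 1 < π / 2 / r := by
    rw [lt_div_iff₀ hr]
    linarith [pi_gt_three]
  obtain ⟨k, ⟨hk, hk1⟩, hkr⟩ := ((hlim.and ((lt_mem_nhds hone).filter_mono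
    nhdsWithin_le_nhds)).and eventually_mem_nhdsWithin).exists
  replace hkr : k * r < π / 2 := (lt_div_iff₀ hr).1 hkr
  have hk0 : 0 < k := zero_lt_one.trans hk1
  refine ⟨k, hk1.le, hkr, fun z hz ↦ ?_⟩
  have hkz : |k * z.im| = k * r := by rw [abs_mul, hz, abs_of_pos hk0]
  have hcos : 0 < cos (k * r) :=
    cos_pos_of_mem_Ioo ⟨by linarith [mul_pos hk0 hr, pi_pos], hkr⟩
  have hle := mul_arctan_le_stripExtension hk0.le hg hgs hg0 (hkz.trans_lt hkr)
    (half_pos hδ).le (m := g z.re - ε / 2) fun s hs ↦ by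
      have h1 : dist s z.re < δ := by
        rw [Real.dist_eq]
        exact (abs_le.2 ⟨by linarith [hs.1], by linarith [hs.2]⟩).trans_lt (half_lt_self hδ)
      have h2 := hgδ h1
      rw [Real.dist_eq] at h2
      linarith [(abs_lt.1 h2).1]
  rw [← cos_abs (k * z.im), hkz] at hle
  set q := 2 / π * arctan (sinh (k * (δ / 2)) / cos (k * r)) with hq
  have hq1 : q ≤ 1 := by
    have := (arctan_lt_pi_div_two (sinh (k * (δ / 2)) / cos (k * r))).le
    calc q ≤ 2 / π * (π / 2) := by rw [hq]; gcongr
      _ = 1 := by field_simp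
  have hq2 : 1 - ε / (2 * (G + 1)) < q := by
    refine hk.trans_le ?_
    rw [hq]
    gcongr
    exact sinh_le_sinh.2 (le_mul_of_one_le_left (half_pos hδ).le hk1.le)
  have hgG : g z.re ≤ G := (le_abs_self _).trans (hG z.re)
  have h3 : (G + 1) * (1 - q) ≤ ε / 2 := by
    have h4 : 1 - q < ε / (2 * (G + 1)) := by linarith
    rw [lt_div_iff₀ (by positivity)] at h4
    linarith
  nlinarith [mul_le_mul_of_nonneg_right (hgG.trans (lt_add_one G).le) (sub_nonneg.2 hq1),
    mul_nonneg hε.le (sub_nonneg.2 hq1)]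

/-- Harmonic measure upper bound on the boundary lines of a slit strip: the density of
the harmonic measure of S = {|Im z| < r} \ I₀ at a real point t with d(t,I₀) ≤ 1, with
respect to arclength on the lines {Im z = ±r}, is at most (2/r)·exp(−d(x,I₀)). This is
expressed by pairing against arbitrary continuous boundary data vanishing on the slit. -/
theorem stmt_11 (r a b : ℝ) (hr : r ∈ Set.Ioo (0 : ℝ) 1)
    (hab : 0 < b - a) (hab1 : b - a ≤ 1)
    (S : Set ℂ) (hS : S = {z : ℂ | |z.im| < r} \ (Complex.ofReal '' Set.Icc a b))
    (t : ℝ) (ht : (t : ℂ) ∈ S) (htd : Metric.infDist t (Set.Icc a b) ≤ 1)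
    (fp fm : ℝ → ℝ) (hfpc : Continuous fp) (hfmc : Continuous fm)
    (hfp0 : ∀ x, 0 ≤ fp x) (hfm0 : ∀ x, 0 ≤ fm x)
    (hfps : HasCompactSupport fp) (hfms : HasCompactSupport fm)
    (u : ℂ → ℝ) (hu : HarmonicOnSet u S)
    (hucont : ContinuousOn u (closure S))
    (hubdd : ∃ Cu : ℝ, ∀ z ∈ closure S, |u z| ≤ Cu)
    (hbp : ∀ x : ℝ, u ((x : ℂ) + (r : ℂ) * Complex.I) = fp x)
    (hbm : ∀ x : ℝ, u ((x : ℂ) - (r : ℂ) * Complex.I) = fm x)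
    (hslit : ∀ x ∈ Set.Icc a b, u (x : ℂ) = 0) :
    u (t : ℂ) ≤
      ∫ x : ℝ, (fp x + fm x) *
        ((2 / r) * Real.exp (-(Metric.infDist x (Set.Icc a b)))) := by
  have hr0 : 0 < r := hr.1
  have hmemS : ∀ z : ℂ, z ∈ S ↔ |z.im| < r ∧ z ∉ Complex.ofReal '' Icc a b := fun z ↦ by
    rw [hS]; rfl
  have hclS : {z : ℂ | |z.im| ≤ r} ⊆ closure S := by
    have h1 : univ ×ℂ (Ioo (-r) 0 ∪ Ioo 0 r) ⊆ S := by
      rintro z ⟨-, hz⟩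
      have hz0 : z.im ≠ 0 := by
        rcases hz with h | h
        exacts [h.2.ne, h.1.ne']
      refine (hmemS z).2 ⟨abs_lt.2 ?_, ?_⟩
      · rcases hz with h | h
        exacts [⟨h.1, h.2.trans hr0⟩, ⟨(neg_lt_zero.2 hr0).trans h.1, h.2⟩]
      · rintro ⟨x, -, rfl⟩
        exact hz0 (Complex.ofReal_im x)
    refine Subset.trans ?_ (closure_mono h1)
    rw [Complex.closure_reProdIm, closure_union, closure_Ioo (neg_lt_zero.2 hr0).ne,
      closure_Ioo hr0.ne, Icc_union_Icc_eq_Icc (neg_lt_zero.2 hr0).le hr0.le, closure_univ]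
    exact fun z hz ↦ ⟨mem_univ _, abs_le.1 hz⟩
  have hSo : IsOpen S := by
    rw [hS]
    exact (isOpen_lt (by fun_prop) continuous_const).sdiff
      (isCompact_Icc.image Complex.continuous_ofReal).isClosed
  have hSconj : ∀ z ∈ S, starRingEnd ℂ z ∈ S := by
    intro z hz
    rw [hmemS] at hz ⊢
    refine ⟨by simpa using hz.1, ?_⟩
    rintro ⟨x, hx, h⟩
    refine hz.2 ⟨x, hx, ?_⟩
    rw [← Complex.conj_conj z, ← h, Complex.conj_ofReal]
  set g : ℝ → ℝ := fun x ↦ (fp x + fm x) / 2 with hg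
  have hgc : Continuous g := (hfpc.add hfmc).div_const 2
  have hgs : HasCompactSupport g := by
    have := (hfps.add hfms).mul_right (f' := fun _ ↦ (2 : ℝ)⁻¹)
    exact this
  have hg0 : ∀ x, 0 ≤ g x := fun x ↦ by have := hfp0 x; have := hfm0 x; simp only [hg]; linarith
  obtain ⟨Cu, hCu⟩ := hubdd
  refine le_of_forall_pos_le_add fun ε hε ↦ ?_
  obtain ⟨k, hk1, hkr, hk⟩ := exists_sub_le_stripExtension hr0 hr.2.le hgc hgs hg0 hε
  have hstrip : ∀ z : ℂ, |z.im| ≤ r → |k * z.im| < π / 2 := by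
    intro z hz
    rw [abs_mul, abs_of_pos (by linarith)]
    exact (mul_le_mul_of_nonneg_left hz (by linarith)).trans_lt hkr
  have hP := stripExtension_harmonicOnSet k hgc hgs
  have hPS : HarmonicOnSet (stripExtension k g) S :=
    hP.mono fun z hz ↦ hstrip z ((hmemS z).1 hz).1.le
  have hW : HarmonicOnSet (fun z ↦ 1 / 2 * (u z + u (starRingEnd ℂ z)) +
      (-1 * stripExtension k g z + -ε)) S :=
    ((hu.add hSo (hu.comp_conj hSconj)).const_mul _).add hSo
      ((hPS.const_mul _).add hSo (harmonicOnSet_const _ S))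
  have huc := hucont.mono hclS
  have hconj : ∀ z : ℂ, |z.im| ≤ r → |(starRingEnd ℂ z).im| ≤ r := fun z hz ↦ by simpa using hz
  have hWt := hW.nonpos_of_strip (r := r) (C := Cu) (z₀ := t) hSo
    (fun z hz ↦ ((hmemS z).1 hz).1.le)
    ((continuousOn_const.mul (huc.add (huc.comp Complex.continuous_conj.continuousOn hconj))).add
      ((continuousOn_const.mul (hP.1.mono hstrip)).add continuousOn_const))
    (fun z hz ↦ by
      have h1 := (abs_le.1 (hCu z (hclS hz))).2
      have h2 := (abs_le.1 (hCu _ (hclS (hconj z hz)))).2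
      have h3 := stripExtension_nonneg (zero_le_one.trans hk1) hg0 (hstrip z hz)
      linarith)
    (fun z hz hzS ↦ by
      rcases hz.lt_or_eq with h | h
      · obtain ⟨x, hx, rfl⟩ : z ∈ Complex.ofReal '' Icc a b := by
          by_contra h'
          exact hzS ((hmemS z).2 ⟨h, h'⟩)
        have h3 := stripExtension_nonneg (zero_le_one.trans hk1) hg0 (hstrip x hz)
        rw [Complex.conj_ofReal, hslit x hx]
        linarith
      · have h1 := hk z h
        have hp := hbp z.re
        have hm := hbm z.re
        simp only [hg] at h1
        rcases eq_or_eq_neg_of_abs_eq h with h | h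
        · rw [show (z.re : ℂ) + r * Complex.I = z by apply Complex.ext <;> simp [h]] at hp
          rw [show (z.re : ℂ) - r * Complex.I = starRingEnd ℂ z by
            apply Complex.ext <;> simp [h]] at hm
          rw [hp, hm]
          linarith
        · rw [show (z.re : ℂ) + r * Complex.I = starRingEnd ℂ z by
            apply Complex.ext <;> simp [h]] at hp
          rw [show (z.re : ℂ) - r * Complex.I = z by apply Complex.ext <;> simp [h]] at hm
          rw [hp, hm]
          linarith)
    (by simpa using hr0.le)
  rw [Complex.conj_ofReal] at hWt
  suffices stripExtension k g t ≤ ∫ x : ℝ, (fp x + fm x) *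
      ((2 / r) * Real.exp (-(Metric.infDist x (Set.Icc a b)))) by linarith
  refine integral_mono (integrable_mul_stripKernel hgc hgs (hstrip t (by simpa using hr0.le)))
    (Continuous.integrable_of_hasCompactSupport ?_ (hfps.add hfms).mul_right) fun s ↦ ?_
  · have := continuous_infDist_pt (Icc a b)
    fun_prop
  have h1 : stripKernel k t s ≤ 4 / r * exp (-(infDist s (Icc a b))) := by
    refine (stripKernel_ofReal_le (zero_le_one.trans hk1) t s).trans ?_
    have h2 : 2 * k / π ≤ 1 / r := by
      rw [div_le_div_iff₀ pi_pos hr0]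
      linarith
    have h3 : infDist s (Icc a b) ≤ 1 + k * |t - s| := by
      have := infDist_le_infDist_add_dist (s := Icc a b) (x := s) (y := t)
      rw [dist_comm, Real.dist_eq] at this
      nlinarith [abs_nonneg (t - s)]
    have h4 : exp (-(k * |t - s|)) ≤ 4 * exp (-(infDist s (Icc a b))) := by
      calc exp (-(k * |t - s|)) ≤ exp (1 + -(infDist s (Icc a b))) := exp_le_exp.2 (by linarith)
        _ = exp 1 * exp (-(infDist s (Icc a b))) := exp_add _ _
        _ ≤ 4 * exp (-(infDist s (Icc a b))) := by
          gcongr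
          linarith [exp_one_lt_d9]
    calc 2 * k / π * exp (-(k * |t - s|)) ≤ 1 / r * (4 * exp (-(infDist s (Icc a b)))) := by
          gcongr
      _ = _ := by ring
  calc g s * stripKernel k t s ≤ g s * (4 / r * exp (-(infDist s (Icc a b)))) :=
        mul_le_mul_of_nonneg_left h1 (hg0 s)
    _ = _ := by simp only [hg]; ring
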